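/- For every n ≥ 22, every finite set S of points in general position in the plane consisting of n red points and at least n−1 blue points spans at least (1/32)·n^{3/2} empty red (2,1)-triangles. -/

import Mathlib

open scoped Classical

/-- A finite set of points in the plane is in general position if no three of its points are
collinear, i.e. every 3-element subset is affinely independent. -/
def GenPos2 (S : Finset (EuclideanSpace ℝ (Fin 2))) : Prop :=
  ∀ T ⊆ S, T.card = 3 →
    AffineIndependent ℝ (Subtype.val : {x : EuclideanSpace ℝ (Fin 2) // x ∈ T} → EuclideanSpace ℝ (Fin 2))

/-- `T` is empty with respect to `S`: no point of `S` other than the vertices lies in the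
(topological) interior of the convex hull of `T`. -/
def EmptyIn2 (S T : Finset (EuclideanSpace ℝ (Fin 2))) : Prop :=
  ∀ s ∈ S, s ∉ T → s ∉ interior (convexHull ℝ (T : Set (EuclideanSpace ℝ (Fin 2))))

/-- The number of empty red (2,1)-triangles spanned by the bicolored set `R ∪ B`:
3-element subsets with two red points and one blue point whose convex hull contains no other
point of `R ∪ B` in its interior. -/
noncomputable def emptyRed21Count (R B : Finset (EuclideanSpace ℝ (Fin 2))) : ℕ :=
  (((R ∪ B).powersetCard 3).filter (fun T =>
    (T ∩ R).card = 2 ∧ (T ∩ B).card = 1 ∧ EmptyIn2 (R ∪ B) T)).card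

/-!
By averaging, some red point `p` far from both ends of the left-to-right order lies in few empty red
(2,1)-triangles, and on one side of `p` the red points outnumber the blue ones by at most one. Sort
the points on this side by slope around `p`. Consecutive points of different colours span an empty
triangle with `p`, so there are few colour changes. A queueing argument on the resulting
two-coloured word then shows that, for each small `k`, many blue points lie in an interval of slopes
in which red exceeds blue by at least `k`. Such a blue point `b` is a vertex of at least `k` empty
red (2,1)-triangles: sort the points of the interval and `p` by slope around `b`, on each side of
`b`; two consecutive red points span an empty triangle with `b`, and the excess of red over blue
forces `k` such pairs. Summing over `k ≤ √n` counts the triangles by their blue vertices.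
-/

open scoped Finset

/-! ### Two-coloured words -/

section Words

variable (red : ℕ → Prop) [DecidablePred red]

/-- The number of red letters minus the number of blue letters at the positions `u ≤ j < v` of a
two-coloured word, whose blue letters are the ones that are not red. -/
def colorExcess (u v : ℕ) : ℤ := ∑ j ∈ Finset.Ico u v, if red j then 1 else -1

/-- The number of colour changes between consecutive letters among the letters `0, …, M`. -/
def colorChanges (M : ℕ) : ℕ := Nat.count (fun j => ¬(red j ↔ red (j + 1))) M

/-- The length of a queue after `i` letters, when each red letter adds a customer and each blue
letter serves one if there is any. It is the largest excess of an interval ending at `i`. -/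
def backlog : ℕ → ℕ
  | 0 => 0
  | i + 1 => if red i then backlog i + 1 else backlog i - 1

/-- The blue positions in the word of the letters `0, …, M` that lie in an interval of excess at
least `k`. -/
noncomputable def heavyBlue (M k : ℕ) : Finset ℕ :=
  {j ∈ Finset.range (M + 1) |
    ¬red j ∧ ∃ u v, u ≤ j ∧ j ≤ v ∧ v ≤ M ∧ (k : ℤ) ≤ colorExcess red u (v + 1)}

lemma colorExcess_add_colorExcess {u v w : ℕ} (huv : u ≤ v) (hvw : v ≤ w) :
    colorExcess red u v + colorExcess red v w = colorExcess red u w :=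
  Finset.sum_Ico_consecutive _ huv hvw

lemma colorExcess_succ_right {u v : ℕ} (huv : u ≤ v) :
    colorExcess red u (v + 1) = colorExcess red u v + if red v then 1 else -1 :=
  Finset.sum_Ico_succ_top huv _

lemma colorExcess_eq_card_sub_card (u v : ℕ) :
    colorExcess red u v =
      #{j ∈ Finset.Ico u v | red j} - #{j ∈ Finset.Ico u v | ¬red j} := by
  simp [colorExcess, Finset.sum_ite, sub_eq_add_neg]

lemma colorExcess_zero_left (n : ℕ) : colorExcess red 0 n = 2 * Nat.count red n - n := by
  induction n with
  | zero => simp [colorExcess]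
  | succ n ih =>
    rw [colorExcess_succ_right red n.zero_le, ih, Nat.count_succ]
    split_ifs <;> push_cast <;> ring

lemma colorExcess_le_count_sub_count {u v : ℕ} (huv : u ≤ v) :
    colorExcess red u v ≤ Nat.count red v - Nat.count red u := by
  induction v, huv using Nat.le_induction with
  | base => simp [colorExcess]
  | succ v huv ih =>
    rw [colorExcess_succ_right red huv, Nat.count_succ]
    split_ifs <;> push_cast <;> linarith

lemma exists_backlog_eq_colorExcess (i : ℕ) :
    ∃ u ≤ i, (backlog red i : ℤ) = colorExcess red u i := by
  induction i with
  | zero => exact ⟨0, le_rfl, by simp [backlog, colorExcess]⟩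
  | succ i ih =>
    obtain ⟨u, hui, hu⟩ := ih
    by_cases hidle : ¬red i ∧ backlog red i = 0
    · exact ⟨i + 1, le_rfl, by simp [backlog, colorExcess, hidle]⟩
    · refine ⟨u, by omega, ?_⟩
      rw [colorExcess_succ_right red hui, ← hu, backlog]
      split_ifs <;> grind

lemma count_red_eq_backlog_add_count_served (i : ℕ) :
    Nat.count red i = backlog red i + Nat.count (fun j => ¬red j ∧ 0 < backlog red j) i := by
  induction i with
  | zero => simp [backlog]
  | succ i ih =>
    simp only [Nat.count_succ, backlog]
    split_ifs <;> grind

-- Along a blue run the backlog strictly decreases until it is zero, so it takes each of the values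
-- `1, …, k` at most once; the `min` counts the values which the current run may still take.
lemma count_served_small_backlog_add_le (k i : ℕ) :
    Nat.count (fun j => ¬red j ∧ 0 < backlog red j ∧ backlog red j ≤ k) i +
      (if red i then 0 else min (backlog red i) k) ≤ k * colorChanges red i := by
  induction i with
  | zero => simp [backlog]
  | succ i ih =>
    simp only [colorChanges, Nat.count_succ, backlog, mul_add] at ih ⊢
    split_ifs at ih ⊢ <;> grind

lemma count_served_small_backlog_le (k M : ℕ) :
    Nat.count (fun j => ¬red j ∧ 0 < backlog red j ∧ backlog red j ≤ k) (M + 1) ≤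
      k * colorChanges red M := by
  have h := count_served_small_backlog_add_le red k M
  rw [Nat.count_succ]
  split_ifs at h ⊢ <;> grind

lemma count_served_large_backlog_le (k M : ℕ) :
    Nat.count (fun j => ¬red j ∧ k < backlog red j) (M + 1) ≤ #(heavyBlue red M k) := by
  rw [Nat.count_eq_card_filter_range]
  refine Finset.card_le_card fun j hj => ?_
  simp only [Finset.mem_filter, Finset.mem_range] at hj
  obtain ⟨hjM, hblue, hk⟩ := hj
  obtain ⟨u, huj, hu⟩ := exists_backlog_eq_colorExcess red j
  refine Finset.mem_filter.2 ⟨Finset.mem_range.2 hjM, hblue, u, j, huj, le_rfl, by omega, ?_⟩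
  rw [colorExcess_succ_right red huj, ← hu, if_neg hblue]
  omega

lemma count_red_le_card_heavyBlue_add_backlog (k M : ℕ) :
    Nat.count red (M + 1) ≤
      #(heavyBlue red M k) + backlog red (M + 1) + k * colorChanges red M := by
  have hserved := count_red_eq_backlog_add_count_served red (M + 1)
  have hsmall := count_served_small_backlog_le red k M
  have hlarge := count_served_large_backlog_le red k M
  have hsplit : Nat.count (fun j => ¬red j ∧ 0 < backlog red j) (M + 1) ≤
      Nat.count (fun j => ¬red j ∧ 0 < backlog red j ∧ backlog red j ≤ k) (M + 1) +
        Nat.count (fun j => ¬red j ∧ k < backlog red j) (M + 1) := by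
    simp only [Nat.count_eq_card_filter_range]
    refine (Finset.card_le_card fun j hj => ?_).trans (Finset.card_union_le _ _)
    simp only [Finset.mem_union, Finset.mem_filter] at hj ⊢
    have := le_or_gt (backlog red j) k
    tauto
  omega

lemma count_reflect (p : ℕ → Prop) [DecidablePred p] (n : ℕ) :
    Nat.count (fun j => p (n - 1 - j)) n = Nat.count p n := by
  simp only [Nat.count_eq_card_filter_range, Finset.card_filter]
  exact Finset.sum_range_reflect (fun j => if p j then 1 else 0) n

lemma colorChanges_reflect (M : ℕ) :
    colorChanges (fun j => red (M - j)) M = colorChanges red M := by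
  rw [colorChanges, colorChanges, ← count_reflect (fun j => ¬(red j ↔ red (j + 1)))]
  simp only [Nat.count_eq_card_filter_range]
  refine congrArg Finset.card (Finset.filter_congr fun j hj => ?_)
  have hjM := Finset.mem_range.1 hj
  rw [show M - (j + 1) = M - 1 - j by omega, show M - j = M - 1 - j + 1 by omega]
  tauto

lemma colorExcess_reflect {M v : ℕ} (u : ℕ) (hv : v ≤ M + 1) :
    colorExcess (fun j => red (M - j)) u v = colorExcess red (M + 1 - v) (M + 1 - u) :=
  Finset.sum_Ico_reflect (fun j => if red j then (1 : ℤ) else -1) u hv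

lemma card_heavyBlue_reflect_le (M k : ℕ) :
    #(heavyBlue (fun j => red (M - j)) M k) ≤ #(heavyBlue red M k) := by
  refine Finset.card_le_card_of_injOn (M - ·) (fun j hj => ?_) fun i hi j hj hij => ?_
  · obtain ⟨-, hblue, u, v, huj, hjv, hvM, hk⟩ := Finset.mem_filter.1 hj
    rw [colorExcess_reflect red u (by omega)] at hk
    refine Finset.mem_filter.2
      ⟨Finset.mem_range.2 (Nat.lt_succ_of_le (M.sub_le j)), hblue, M - v, M - u,
        Nat.sub_le_sub_left hjv M, Nat.sub_le_sub_left huj M, M.sub_le u, ?_⟩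
    rwa [show M - v = M + 1 - (v + 1) by omega, show M - u + 1 = M + 1 - u by omega]
  · have hiM := Finset.mem_range.1 (Finset.mem_filter.1 hi).1
    have hjM := Finset.mem_range.1 (Finset.mem_filter.1 hj).1
    dsimp only at hij
    omega

-- The two backlogs are the excesses of a suffix and of a prefix. If these overlap, their sum is the
-- excess of the whole word, which is not positive, plus that of the overlap.
lemma backlog_add_backlog_reflect_le {M : ℕ} (hred : 2 * Nat.count red (M + 1) ≤ M + 1) :
    backlog red (M + 1) + backlog (fun j => red (M - j)) (M + 1) ≤ Nat.count red (M + 1) := by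
  obtain ⟨u, hu, hfinal⟩ := exists_backlog_eq_colorExcess red (M + 1)
  obtain ⟨v', hv', hinitial⟩ := exists_backlog_eq_colorExcess (fun j => red (M - j)) (M + 1)
  rw [colorExcess_reflect red v' le_rfl, Nat.sub_self] at hinitial
  set v := M + 1 - v'
  have hv : v ≤ M + 1 := by omega
  rcases le_total v u with hvu | huv
  · have hinitial_le := colorExcess_le_count_sub_count red v.zero_le
    have hfinal_le := colorExcess_le_count_sub_count red hu
    have hmono := Nat.count_monotone red hvu
    simp only [Nat.count_zero] at hinitial_le
    omega
  · have htotal := colorExcess_zero_left red (M + 1)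
    have hoverlap := colorExcess_le_count_sub_count red huv
    have hmono := Nat.count_monotone red hv
    have h₁ := colorExcess_add_colorExcess red u.zero_le huv
    have h₂ := colorExcess_add_colorExcess red u.zero_le hu
    omega

theorem count_red_le_two_mul_card_heavyBlue_add {M : ℕ} (k : ℕ)
    (hred : 2 * Nat.count red (M + 1) ≤ M + 1) :
    Nat.count red (M + 1) ≤ 2 * #(heavyBlue red M k) + 2 * k * colorChanges red M := by
  have hforward := count_red_le_card_heavyBlue_add_backlog red k M
  have hbackward := count_red_le_card_heavyBlue_add_backlog (fun j => red (M - j)) k M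
  have hcount : Nat.count (fun j => red (M - j)) (M + 1) = Nat.count red (M + 1) :=
    count_reflect red (M + 1)
  rw [colorChanges_reflect, hcount] at hbackward
  have hheavy := card_heavyBlue_reflect_le red M k
  have hbacklog := backlog_add_backlog_reflect_le red hred
  rw [mul_assoc]
  omega

lemma count_red_le_count_blue_add_count_red_pairs (M : ℕ) :
    Nat.count red (M + 1) ≤
      Nat.count (fun j => ¬red j) (M + 1) + Nat.count (fun j => red j ∧ red (j + 1)) M + 1 := by
  suffices h : Nat.count red (M + 1) ≤ Nat.count (fun j => ¬red j) (M + 1) +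
      Nat.count (fun j => red j ∧ red (j + 1)) M + (if red M then 1 else 0) by
    split_ifs at h <;> omega
  induction M with
  | zero => simp [Nat.count_succ]
  | succ M ih =>
    simp only [Nat.count_succ] at ih ⊢
    split_ifs at ih ⊢ <;> grind

lemma colorChanges_pos {M i j : ℕ} (hi : i ≤ M) (hj : j ≤ M) (hred : red i) (hblue : ¬red j) :
    0 < colorChanges red M := by
  by_contra! hnone
  rw [colorChanges, Nat.le_zero, Nat.count_eq_card_filter_range, Finset.card_eq_zero,
    Finset.filter_eq_empty_iff] at hnone
  have hconst : ∀ l ≤ M, (red l ↔ red 0) := by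
    intro l hl
    induction l with
    | zero => rfl
    | succ l ih =>
      rw [← ih (by omega)]
      exact (not_not.1 (hnone (Finset.mem_range.2 hl))).symm
  exact hblue ((hconst j hj).2 ((hconst i hi).1 hred))

end Words

/-! ### Slopes and fans around a point -/

section Slopes

variable {E : Type*} [AddCommGroup E] [Module ℝ E] [TopologicalSpace E]

/-- The slope of the line from `o` to `z` in the coordinates `f`, `g`, where `f` is the abscissa.
It is the junk value `0` when `f z = f o`. -/
noncomputable def slopeFrom (f g : E →L[ℝ] ℝ) (o z : E) : ℝ := (g z - g o) / (f z - f o)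

/-- Independent coordinates `f`, `g` in which no two points of `S` have the same abscissa and no
three points of `S` are collinear. -/
structure IsGenericFrame (S : Finset E) (f g : E →L[ℝ] ℝ) : Prop where
  linearIndependent : LinearIndependent ℝ ![f, g]
  injOn : Set.InjOn f S
  slope_injOn : ∀ o ∈ S, Set.InjOn (slopeFrom f g o) (S \ {o})

/-- `e` lists the points of `H`, all of which have a larger abscissa than `o`, by increasing slope
from `o`. -/
structure IsSlopeEnum (f g : E →L[ℝ] ℝ) (o : E) (H : Finset E) (e : ℕ → E) : Prop where
  right : ∀ x ∈ H, f o < f x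
  bijOn : Set.BijOn e (Set.Iio #H) H
  strictMonoOn : StrictMonoOn (slopeFrom f g o ∘ e) (Set.Iio #H)

variable {S H : Finset E} {f g : E →L[ℝ] ℝ} {o : E} {e : ℕ → E}

lemma IsGenericFrame.mono (hfg : IsGenericFrame S f g) {S' : Finset E} (hS : S' ⊆ S) :
    IsGenericFrame S' f g where
  linearIndependent := hfg.linearIndependent
  injOn := hfg.injOn.mono hS
  slope_injOn o ho := (hfg.slope_injOn o (hS ho)).mono (Set.sdiff_subset_sdiff_left hS)

lemma slopeFrom_neg_left (f g : E →L[ℝ] ℝ) (o z : E) :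
    slopeFrom (-f) g o z = -slopeFrom f g o z := by
  rw [slopeFrom, slopeFrom, ← div_neg, neg_sub, neg_apply, neg_apply, neg_sub_neg]

lemma IsGenericFrame.neg (hfg : IsGenericFrame S f g) :
    IsGenericFrame S (-f) g where
  linearIndependent := by
    refine LinearIndependent.pair_iff.2 fun a b h => ?_
    have hab := LinearIndependent.pair_iff.1 hfg.linearIndependent (-a) b (by simpa using h)
    simpa using hab
  injOn := fun x hx y hy h => hfg.injOn hx hy (neg_injective h)
  slope_injOn o ho x hx y hy h :=
    hfg.slope_injOn o ho hx hy (by simpa [slopeFrom_neg_left] using h)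

lemma exists_bijOn_strictMonoOn {α β : Type*} [Nonempty α] [LinearOrder β] (H : Finset α)
    {σ : α → β} (hσ : Set.InjOn σ H) :
    ∃ e : ℕ → α, Set.BijOn e (Set.Iio #H) H ∧ StrictMonoOn (σ ∘ e) (Set.Iio #H) := by
  let φ := (H.image σ).orderEmbOfFin (Finset.card_image_of_injOn hσ)
  have hφ (i : Fin #H) : ∃ x ∈ H, σ x = φ i :=
    Finset.mem_image.1 (Finset.orderEmbOfFin_mem _ _ i)
  choose x hxH hx using hφ
  let e (i : ℕ) : α := if h : i < #H then x ⟨i, h⟩ else Classical.arbitrary α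
  have he {i : ℕ} (hi : i < #H) : e i = x ⟨i, hi⟩ := dif_pos hi
  have hmono : StrictMonoOn (σ ∘ e) (Set.Iio #H) := by
    intro i hi j hj hij
    simp only [Function.comp_apply, he hi, he hj, hx]
    exact φ.strictMono hij
  refine ⟨e, ⟨fun i hi => he hi ▸ hxH _, hmono.injOn.of_comp, fun z hz => ?_⟩, hmono⟩
  obtain ⟨i, hi⟩ : σ z ∈ Set.range φ := by
    rw [Finset.range_orderEmbOfFin]
    exact Finset.mem_coe.2 (Finset.mem_image_of_mem σ hz)
  exact ⟨i, i.2, (he i.2).trans (hσ (hxH i) hz ((hx i).trans hi))⟩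

lemma IsGenericFrame.exists_isSlopeEnum [DecidableEq E] (hfg : IsGenericFrame S f g) (ho : o ∈ S)
    (hleft : ∀ x ∈ S, f o ≤ f x) : ∃ e, IsSlopeEnum f g o (S.erase o) e := by
  have hslope : Set.InjOn (slopeFrom f g o) (S.erase o) :=
    (hfg.slope_injOn o ho).mono (Finset.coe_erase o S).subset
  obtain ⟨e, hbij, hmono⟩ := exists_bijOn_strictMonoOn (S.erase o) hslope
  refine ⟨e, fun x hx => ?_, hbij, hmono⟩
  obtain ⟨hxo, hxS⟩ := Finset.mem_erase.1 hx
  exact (hleft x hxS).lt_of_ne (hfg.injOn.ne ho hxS hxo.symm)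

namespace IsSlopeEnum

lemma mem (he : IsSlopeEnum f g o H e) {i : ℕ} (hi : i < #H) : e i ∈ H := he.bijOn.mapsTo hi

lemma ne_apex (he : IsSlopeEnum f g o H e) {i : ℕ} (hi : i < #H) : e i ≠ o :=
  fun h => (he.right _ (he.mem hi)).ne (congrArg f h.symm)

lemma eq_of_eq (he : IsSlopeEnum f g o H e) {i j : ℕ} (hi : i < #H) (hj : j < #H)
    (h : e i = e j) : i = j :=
  he.bijOn.injOn hi hj h

lemma slope_lt_iff (he : IsSlopeEnum f g o H e) {i j : ℕ} (hi : i < #H) (hj : j < #H) :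
    slopeFrom f g o (e i) < slopeFrom f g o (e j) ↔ i < j :=
  he.strictMonoOn.lt_iff_lt hi hj

lemma slope_le (he : IsSlopeEnum f g o H e) {i j : ℕ} (hij : i ≤ j) (hj : j < #H) :
    slopeFrom f g o (e i) ≤ slopeFrom f g o (e j) :=
  he.strictMonoOn.monotoneOn (hij.trans_lt hj) hj hij

lemma card_filter_eq_count (he : IsSlopeEnum f g o H e) (p : E → Prop)
    [DecidablePred p] : #(H.filter p) = Nat.count (fun i => p (e i)) #H := by
  rw [Nat.count_eq_card_filter_range]
  refine (Finset.card_nbij e (fun i hi => ?_) (fun i hi j hj h => ?_) fun x hx => ?_).symm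
  · obtain ⟨hi, hp⟩ := Finset.mem_filter.1 hi
    exact Finset.mem_filter.2 ⟨he.mem (Finset.mem_range.1 hi), hp⟩
  · exact he.eq_of_eq (Finset.mem_range.1 (Finset.mem_filter.1 hi).1)
      (Finset.mem_range.1 (Finset.mem_filter.1 hj).1) h
  · obtain ⟨hxH, hp⟩ := Finset.mem_filter.1 hx
    obtain ⟨i, hi, rfl⟩ := he.bijOn.surjOn hxH
    exact ⟨i, Finset.mem_filter.2 ⟨Finset.mem_range.2 hi, hp⟩, rfl⟩

end IsSlopeEnum

variable [ContinuousAdd E] [ContinuousSMul ℝ E]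

lemma lt_of_mem_interior_convexHull {l : E →L[ℝ] ℝ} (hl : l ≠ 0) {T : Set E} {c : ℝ}
    (hT : ∀ x ∈ T, c ≤ l x) {z : E} (hz : z ∈ interior (convexHull ℝ T)) : c < l z := by
  have hhull : convexHull ℝ T ⊆ {x | c ≤ l x} :=
    convexHull_min hT (convex_halfSpace_ge l.toLinearMap.isLinear c)
  have himage : l '' interior (convexHull ℝ T) ⊆ interior (Set.Ici c) :=
    interior_maximal (Set.image_subset_iff.2 fun x hx => hhull (interior_subset hx))
      (l.isOpenMap_of_ne_zero hl _ isOpen_interior)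
  rw [interior_Ici] at himage
  exact himage ⟨z, hz, rfl⟩

lemma slopeFrom_mem_Ioo_of_mem_interior_convexHull (hfg : LinearIndependent ℝ ![f, g])
    {T : Set E} {α β : ℝ} (hT : ∀ x ∈ T, x = o ∨ f o < f x ∧ slopeFrom f g o x ∈ Set.Icc α β)
    {z : E} (hz : z ∈ interior (convexHull ℝ T)) :
    f o < f z ∧ slopeFrom f g o z ∈ Set.Ioo α β := by
  have hbound {a b : ℝ} (hab : a ≠ 0 ∨ b ≠ 0)
      (h : ∀ x ∈ T, x ≠ o → 0 ≤ a * (f x - f o) + b * (g x - g o)) :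
      0 < a * (f z - f o) + b * (g z - g o) := by
    have hne : a • f + b • g ≠ 0 := fun h0 => by
      obtain ⟨ha, hb⟩ := LinearIndependent.pair_iff.1 hfg a b h0
      exact hab.elim (· ha) (· hb)
    have hlt : a * f o + b * g o < a * f z + b * g z :=
      lt_of_mem_interior_convexHull hne (fun x hx => ?_) hz
    · linarith
    · change a * f o + b * g o ≤ a * f x + b * g x
      obtain rfl | hxo := eq_or_ne x o
      · rfl
      · linarith [h x hx hxo]
  have hpoint {x : E} (hx : x ∈ T) (hxo : x ≠ o) :
      0 < f x - f o ∧ α * (f x - f o) ≤ g x - g o ∧ g x - g o ≤ β * (f x - f o) := by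
    obtain ⟨hright, hα, hβ⟩ := (hT x hx).resolve_left hxo
    have hpos := sub_pos.2 hright
    exact ⟨hpos, (le_div_iff₀ hpos).1 hα, (div_le_iff₀ hpos).1 hβ⟩
  have hright := hbound (a := 1) (b := 0) (.inl one_ne_zero) fun x hx hxo => by
    linarith [(hpoint hx hxo).1]
  have hα := hbound (a := -α) (b := 1) (.inr one_ne_zero) fun x hx hxo => by
    linarith [(hpoint hx hxo).2.1]
  have hβ := hbound (a := β) (b := -1) (.inr (neg_ne_zero.2 one_ne_zero)) fun x hx hxo => by
    linarith [(hpoint hx hxo).2.2]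
  have hpos : 0 < f z - f o := by linarith
  exact ⟨sub_pos.1 hpos, (lt_div_iff₀ hpos).2 (by linarith), (div_lt_iff₀ hpos).2 (by linarith)⟩

end Slopes

section Fans

variable {E : Type*} [DecidableEq E]

/-- The apex `o` together with the points `e i, …, e j`; for `j = i + 1` these are the vertices of
a triangle with apex `o`. -/
def fan (o : E) (e : ℕ → E) (i j : ℕ) : Finset E := insert o ((Finset.Icc i j).image e)

variable {o : E} {e : ℕ → E} {i j : ℕ}

lemma mem_fan {x : E} : x ∈ fan o e i j ↔ x = o ∨ ∃ l, i ≤ l ∧ l ≤ j ∧ e l = x := by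
  simp [fan, and_assoc]

lemma apex_mem_fan : o ∈ fan o e i j := Finset.mem_insert_self ..

variable [AddCommGroup E] [Module ℝ E] [TopologicalSpace E] {S H : Finset E} {f g : E →L[ℝ] ℝ}

namespace IsSlopeEnum

lemma mem_fan_iff (he : IsSlopeEnum f g o H e) (hj : j < #H) {l : ℕ} (hl : l < #H) :
    e l ∈ fan o e i j ↔ i ≤ l ∧ l ≤ j := by
  rw [mem_fan, or_iff_right (he.ne_apex hl)]
  constructor
  · rintro ⟨l', hil, hlj, h⟩
    rw [← he.eq_of_eq (hlj.trans_lt hj) hl h]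
    exact ⟨hil, hlj⟩
  · exact fun h => ⟨l, h.1, h.2, rfl⟩

lemma fan_subset (he : IsSlopeEnum f g o H e) (ho : o ∈ S) (hH : H ⊆ S) (hj : j < #H) :
    fan o e i j ⊆ S := by
  intro x hx
  obtain rfl | ⟨l, -, hlj, rfl⟩ := mem_fan.1 hx
  exacts [ho, hH (he.mem (hlj.trans_lt hj))]

lemma card_filter_fan (he : IsSlopeEnum f g o H e) (hj : j < #H) (p : E → Prop)
    [DecidablePred p] :
    #{x ∈ fan o e i j | p x} = (if p o then 1 else 0) + #{l ∈ Finset.Icc i j | p (e l)} := by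
  have himage : #{x ∈ (Finset.Icc i j).image e | p x} = #{l ∈ Finset.Icc i j | p (e l)} := by
    rw [Finset.filter_image]
    refine Finset.card_image_of_injOn fun l hl l' hl' h => ?_
    simp only [Finset.coe_filter, Finset.mem_Icc, Set.mem_ofPred_eq] at hl hl'
    exact he.eq_of_eq (by omega) (by omega) h
  have hapex : o ∉ (Finset.Icc i j).image e := fun h => by
    obtain ⟨l, hl, hlo⟩ := Finset.mem_image.1 h
    exact he.ne_apex ((Finset.mem_Icc.1 hl).2.trans_lt hj) hlo
  rw [fan, Finset.filter_insert]
  split_ifs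
  · rw [Finset.card_insert_of_notMem (fun h => hapex (Finset.mem_filter.1 h).1), himage, add_comm]
  · rw [himage, zero_add]

lemma fan_triangle_injOn (he : IsSlopeEnum f g o H e) :
    Set.InjOn (fun i => fan o e i (i + 1)) {i | i + 1 < #H} := by
  have hle {i j : ℕ} (hi : i + 1 < #H) (hj : j + 1 < #H)
      (h : fan o e i (i + 1) = fan o e j (j + 1)) : j ≤ i := by
    have hmem : e i ∈ fan o e j (j + 1) := h ▸ mem_fan.2 (Or.inr ⟨i, le_rfl, i.le_succ, rfl⟩)
    exact ((he.mem_fan_iff hj (by omega)).1 hmem).1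
  exact fun i hi j hj h => (hle hj hi h.symm).antisymm (hle hi hj h)

variable [ContinuousAdd E] [ContinuousSMul ℝ E]

lemma mem_fan_of_mem_interior_convexHull_fan (he : IsSlopeEnum f g o H e)
    (hfg : LinearIndependent ℝ ![f, g]) (hij : i ≤ j) (hj : j < #H) {z : E}
    (hz : z ∈ interior (convexHull ℝ (fan o e i j : Set E))) (hzH : z = o ∨ z ∈ H) :
    z ∈ fan o e i j := by
  have hfan : ∀ x ∈ (fan o e i j : Set E), x = o ∨ f o < f x ∧
      slopeFrom f g o x ∈ Set.Icc (slopeFrom f g o (e i)) (slopeFrom f g o (e j)) := by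
    intro x hx
    refine (mem_fan.1 hx).imp_right ?_
    rintro ⟨l, hil, hlj, rfl⟩
    have hl := hlj.trans_lt hj
    exact ⟨he.right _ (he.mem hl), he.slope_le hil hl, he.slope_le hlj hj⟩
  obtain ⟨-, hlower, hupper⟩ := slopeFrom_mem_Ioo_of_mem_interior_convexHull hfg hfan hz
  obtain rfl | hzH := hzH
  · exact apex_mem_fan
  · obtain ⟨l, hl, rfl⟩ := he.bijOn.surjOn hzH
    exact (he.mem_fan_iff hj hl).2 ⟨((he.slope_lt_iff (hij.trans_lt hj) hl).1 hlower).le,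
      ((he.slope_lt_iff hl hj).1 hupper).le⟩

end IsSlopeEnum
end Fans

/-! ### Generic coordinates in the plane -/

section Plane

/-- The Euclidean plane. -/
abbrev Plane := EuclideanSpace ℝ (Fin 2)

lemma GenPos2.not_collinear {S : Finset Plane} (hS : GenPos2 S) {o a b : Plane} (ho : o ∈ S)
    (ha : a ∈ S) (hb : b ∈ S) (hoa : o ≠ a) (hob : o ≠ b) (hab : a ≠ b) :
    ¬Collinear ℝ {o, a, b} := by
  have hcard : #{o, a, b} = 3 := Finset.card_eq_three.2 ⟨o, a, b, hoa, hob, hab, rfl⟩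
  have hindep := hS {o, a, b} (by simp [Finset.insert_subset_iff, ho, ha, hb]) hcard
  have hrank := hindep.finrank_vectorSpan (n := 2) (by simpa using hcard)
  have hset : {x | x ∈ ({o, a, b} : Finset Plane)} = {o, a, b} := by simp [Set.ext_iff]
  rw [Subtype.range_coe_subtype, hset] at hrank
  exact fun hcol => absurd (hrank.symm.trans_le hcol.finrank_le_one) (by norm_num)

/-- The abscissa along the first axis, sheared by `t` along the second one. -/
noncomputable def shearedAbscissa (t : ℝ) : Plane →L[ℝ] ℝ :=
  EuclideanSpace.proj 0 + t • EuclideanSpace.proj 1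

/-- The second coordinate. -/
noncomputable def ordinate : Plane →L[ℝ] ℝ := EuclideanSpace.proj 1

lemma shearedAbscissa_apply (t : ℝ) (x : Plane) : shearedAbscissa t x = x 0 + t * x 1 := rfl

lemma ordinate_apply (x : Plane) : ordinate x = x 1 := rfl

lemma linearIndependent_shearedAbscissa_ordinate (t : ℝ) :
    LinearIndependent ℝ ![shearedAbscissa t, ordinate] := by
  refine LinearIndependent.pair_iff.2 fun a b h => ?_
  have ha : a = 0 := by
    simpa [shearedAbscissa_apply, ordinate_apply] using DFunLike.congr_fun h !₂[1, 0]
  have hb : b = 0 := by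
    simpa [shearedAbscissa_apply, ordinate_apply, ha] using DFunLike.congr_fun h !₂[0, 1]
  exact ⟨ha, hb⟩

lemma exists_shearedAbscissa_injOn (S : Finset Plane) : ∃ t, Set.InjOn (shearedAbscissa t) S := by
  obtain ⟨t, ht⟩ := Infinite.exists_notMem_finset
    ((S ×ˢ S).image fun z => -(z.1 0 - z.2 0) / (z.1 1 - z.2 1))
  refine ⟨t, fun x hx y hy hxy => ?_⟩
  rw [shearedAbscissa_apply, shearedAbscissa_apply] at hxy
  by_cases h₁ : x 1 = y 1
  · have h₀ : x 0 = y 0 := by rw [h₁] at hxy; exact add_right_cancel hxy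
    ext i
    fin_cases i
    exacts [h₀, h₁]
  · refine absurd (Finset.mem_image.2 ⟨(x, y), Finset.mk_mem_product hx hy, ?_⟩) ht
    rw [div_eq_iff (sub_ne_zero.2 h₁)]
    linarith

lemma collinear_of_slopeFrom_eq {t s : ℝ} {o a b : Plane}
    (ha : shearedAbscissa t a ≠ shearedAbscissa t o)
    (hb : shearedAbscissa t b ≠ shearedAbscissa t o)
    (has : slopeFrom (shearedAbscissa t) ordinate o a = s)
    (hbs : slopeFrom (shearedAbscissa t) ordinate o b = s) : Collinear ℝ {o, a, b} := by
  have hline {z : Plane} (hz : shearedAbscissa t z ≠ shearedAbscissa t o)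
      (hs : slopeFrom (shearedAbscissa t) ordinate o z = s) :
      z = (shearedAbscissa t z - shearedAbscissa t o) • !₂[1 - t * s, s] +ᵥ o := by
    rw [slopeFrom, div_eq_iff (sub_ne_zero.2 hz)] at hs
    simp only [shearedAbscissa_apply, ordinate_apply] at hs
    have h₀ : z 0 = (z 0 + t * z 1 - (o 0 + t * o 1)) * (1 - t * s) + o 0 := by
      linear_combination (-t) * hs
    have h₁ : z 1 = (z 0 + t * z 1 - (o 0 + t * o 1)) * s + o 1 := by linear_combination hs
    ext i
    fin_cases i
    exacts [h₀, h₁]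
  refine (collinear_iff_of_mem (Set.mem_insert o _)).2 ⟨!₂[1 - t * s, s], ?_⟩
  rintro z (rfl | rfl | rfl)
  exacts [⟨0, by simp⟩, ⟨_, hline ha has⟩, ⟨_, hline hb hbs⟩]

theorem GenPos2.exists_isGenericFrame {S : Finset Plane} (hS : GenPos2 S) :
    ∃ f g, IsGenericFrame S f g := by
  obtain ⟨t, ht⟩ := exists_shearedAbscissa_injOn S
  refine ⟨shearedAbscissa t, ordinate, linearIndependent_shearedAbscissa_ordinate t, ht,
    fun o ho a ha b hb hab => ?_⟩
  obtain ⟨ha, hao⟩ := ha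
  obtain ⟨hb, hbo⟩ := hb
  by_contra hne
  exact hS.not_collinear ho ha hb (Ne.symm hao) (Ne.symm hbo) hne
    (collinear_of_slopeFrom_eq (ht.ne ha ho hao) (ht.ne hb ho hbo) hab rfl)

end Plane

/-! ### Empty triangles -/

section Triangles

variable {R B R' B' S : Finset Plane}

/-- The set of the empty red (2,1)-triangles counted by `emptyRed21Count`. -/
noncomputable def emptyRed21Triangles (R B : Finset Plane) : Finset (Finset Plane) :=
  ((R ∪ B).powersetCard 3).filter fun T =>
    (T ∩ R).card = 2 ∧ (T ∩ B).card = 1 ∧ EmptyIn2 (R ∪ B) T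

lemma emptyRed21Count_eq_card (R B : Finset Plane) :
    emptyRed21Count R B = #(emptyRed21Triangles R B) :=
  rfl

/-- The number of empty red (2,1)-triangles with vertex `x`. -/
noncomputable def triangleDegree (R B : Finset Plane) (x : Plane) : ℕ :=
  #{T ∈ emptyRed21Triangles R B | x ∈ T}

lemma card_inter_add_card_inter (hd : Disjoint R B) {T : Finset Plane} (hT : T ⊆ R ∪ B) :
    #(T ∩ R) + #(T ∩ B) = #T := by
  rw [← Finset.card_union_of_disjoint (hd.mono Finset.inter_subset_right Finset.inter_subset_right),
    ← Finset.inter_union_distrib_left, Finset.inter_eq_left.2 hT]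

lemma mem_emptyRed21Triangles (hd : Disjoint R B) {T : Finset Plane} :
    T ∈ emptyRed21Triangles R B ↔
      T ⊆ R ∪ B ∧ #T = 3 ∧ #(T ∩ R) = 2 ∧ EmptyIn2 (R ∪ B) T := by
  rw [emptyRed21Triangles, Finset.mem_filter, Finset.mem_powersetCard]
  constructor
  · rintro ⟨⟨hT, hcard⟩, hred, -, hempty⟩
    exact ⟨hT, hcard, hred, hempty⟩
  · rintro ⟨hT, hcard, hred, hempty⟩
    have := card_inter_add_card_inter hd hT
    exact ⟨⟨hT, hcard⟩, hred, by omega, hempty⟩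

lemma emptyRed21Triangles_mono (hd : Disjoint R B) (hR : R' ⊆ R) (hB : B' ⊆ B)
    (hempty : EmptyIn2 (R ∪ B) (R' ∪ B')) :
    emptyRed21Triangles R' B' ⊆ emptyRed21Triangles R B := by
  intro T hT
  obtain ⟨hTsub, hcard, hred, hTempty⟩ := (mem_emptyRed21Triangles (hd.mono hR hB)).1 hT
  refine (mem_emptyRed21Triangles hd).2
    ⟨hTsub.trans (Finset.union_subset_union hR hB), hcard, ?_, fun s hs hsT hsint => ?_⟩
  · have hle : #(T ∩ R') + #(T ∩ B') ≤ #(T ∩ R') + #(T ∩ B) := by gcongr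
    have hle' : #(T ∩ R') ≤ #(T ∩ R) := by gcongr
    have h' := card_inter_add_card_inter (hd.mono hR hB) hTsub
    have h := card_inter_add_card_inter hd (hTsub.trans (Finset.union_subset_union hR hB))
    omega
  · refine hTempty s (by_contra fun hs' => hempty s hs hs' ?_) hsT hsint
    exact interior_mono (convexHull_mono (Finset.coe_subset.2 hTsub)) hsint

lemma triangleDegree_mono (hd : Disjoint R B) (hR : R' ⊆ R) (hB : B' ⊆ B)
    (hempty : EmptyIn2 (R ∪ B) (R' ∪ B')) (x : Plane) :
    triangleDegree R' B' x ≤ triangleDegree R B x :=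
  Finset.card_le_card (Finset.filter_subset_filter _ (emptyRed21Triangles_mono hd hR hB hempty))

/-- The points of `S` in the closed half-plane to the right of `p`, for the abscissa `f`. The left
one is obtained for `-f`. -/
noncomputable def rightOf (f : Plane →L[ℝ] ℝ) (p : Plane) (S : Finset Plane) : Finset Plane :=
  {x ∈ S | f p ≤ f x}

variable {f g : Plane →L[ℝ] ℝ} {p b : Plane}

lemma mem_rightOf {x : Plane} : x ∈ rightOf f p S ↔ x ∈ S ∧ f p ≤ f x := Finset.mem_filter

lemma rightOf_subset : rightOf f p S ⊆ S := Finset.filter_subset _ _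

lemma rightOf_union : rightOf f p (R ∪ B) = rightOf f p R ∪ rightOf f p B :=
  Finset.filter_union ..

lemma le_of_mem_rightOf_union {x : Plane} (hx : x ∈ rightOf f p R ∪ rightOf f p B) :
    f p ≤ f x := by
  rw [← rightOf_union] at hx
  exact (mem_rightOf.1 hx).2

lemma IsGenericFrame.mono_rightOf (hfg : IsGenericFrame (R ∪ B) f g) (h : Plane →L[ℝ] ℝ)
    (p : Plane) :
    IsGenericFrame (rightOf h p R ∪ rightOf h p B) f g :=
  hfg.mono (rightOf_union ▸ rightOf_subset)

lemma rightOf_union_rightOf_neg : rightOf f p S ∪ rightOf (-f) p S = S := by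
  ext x
  simp only [Finset.mem_union, mem_rightOf, neg_apply, neg_le_neg_iff, ← and_or_left,
    le_total (f p) (f x), and_true]

lemma rightOf_inter_rightOf_neg (hf : Set.InjOn f S) (hp : p ∈ S) :
    rightOf f p S ∩ rightOf (-f) p S = {p} := by
  ext x
  simp only [Finset.mem_inter, mem_rightOf, neg_apply, neg_le_neg_iff, Finset.mem_singleton]
  constructor
  · rintro ⟨⟨hx, hpx⟩, -, hxp⟩
    exact hf hx hp (hxp.antisymm hpx)
  · rintro rfl
    exact ⟨⟨hp, le_rfl⟩, hp, le_rfl⟩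

lemma emptyIn2_rightOf (hf : f ≠ 0) : EmptyIn2 S (rightOf f p S) := by
  intro s hs hsp hsint
  refine hsp (mem_rightOf.2 ⟨hs, ?_⟩)
  exact (lt_of_mem_interior_convexHull hf (fun x hx => (mem_rightOf.1 hx).2) hsint).le

lemma emptyIn2_fan {o : Plane} {e : ℕ → Plane} (hfg : LinearIndependent ℝ ![f, g])
    (he : IsSlopeEnum f g o (S.erase o) e) {i j : ℕ} (hij : i ≤ j) (hj : j < #(S.erase o)) :
    EmptyIn2 S (fan o e i j) := fun _ hs hsfan hsint =>
  hsfan (he.mem_fan_of_mem_interior_convexHull_fan hfg hij hj hsint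
    (or_iff_not_imp_left.2 fun hso => Finset.mem_erase.2 ⟨hso, hs⟩))

lemma card_fan_inter {o : Plane} {e : ℕ → Plane} {H : Finset Plane} (he : IsSlopeEnum f g o H e)
    {i j : ℕ} (hj : j < #H) (A : Finset Plane) :
    #(fan o e i j ∩ A) = (if o ∈ A then 1 else 0) + #{l ∈ Finset.Icc i j | e l ∈ A} := by
  rw [← Finset.filter_mem_eq_inter, he.card_filter_fan hj]

lemma card_fan_triangle_inter {o : Plane} {e : ℕ → Plane} {H : Finset Plane}
    (he : IsSlopeEnum f g o H e) {j : ℕ} (hj : j + 1 < #H) (A : Finset Plane) :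
    #(fan o e j (j + 1) ∩ A) = (if o ∈ A then 1 else 0) + (if e j ∈ A then 1 else 0) +
      (if e (j + 1) ∈ A then 1 else 0) := by
  rw [card_fan_inter he hj, Finset.card_filter, Finset.sum_Icc_succ_top j.le_succ,
    Finset.Icc_self, Finset.sum_singleton, add_assoc]

lemma fan_triangle_mem_emptyRed21Triangles (hd : Disjoint R B) {o : Plane} {e : ℕ → Plane}
    (hfg : LinearIndependent ℝ ![f, g]) (ho : o ∈ R ∪ B)
    (he : IsSlopeEnum f g o ((R ∪ B).erase o) e) {j : ℕ} (hj : j + 1 < #((R ∪ B).erase o))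
    (hred : #(fan o e j (j + 1) ∩ R) = 2) : fan o e j (j + 1) ∈ emptyRed21Triangles R B := by
  have hsub : fan o e j (j + 1) ⊆ R ∪ B := he.fan_subset ho (Finset.erase_subset _ _) hj
  refine (mem_emptyRed21Triangles hd).2 ⟨hsub, ?_, hred, emptyIn2_fan hfg he j.le_succ hj⟩
  have hS (l : ℕ) (hl : l < #((R ∪ B).erase o)) : e l ∈ R ∪ B := Finset.mem_of_mem_erase (he.mem hl)
  rw [← Finset.inter_eq_left.2 hsub, card_fan_triangle_inter he hj, if_pos ho,
    if_pos (hS j (by omega)), if_pos (hS _ hj)]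

lemma count_fan_triangles_le_triangleDegree (hd : Disjoint R B) {o : Plane} {e : ℕ → Plane}
    (hfg : LinearIndependent ℝ ![f, g]) (ho : o ∈ R ∪ B)
    (he : IsSlopeEnum f g o ((R ∪ B).erase o) e) {M : ℕ} (hM : M < #((R ∪ B).erase o)) :
    Nat.count (fun j => #(fan o e j (j + 1) ∩ R) = 2) M ≤ triangleDegree R B o := by
  rw [Nat.count_eq_card_filter_range]
  refine Finset.card_le_card_of_injOn (fun j => fan o e j (j + 1)) (fun j hj => ?_)
    (he.fan_triangle_injOn.mono fun j hj => ?_)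
  all_goals
    obtain ⟨hjM, hred⟩ := Finset.mem_filter.1 hj
    have hj : j + 1 < #((R ∪ B).erase o) := by have := Finset.mem_range.1 hjM; omega
  · exact Finset.mem_filter.2
      ⟨fan_triangle_mem_emptyRed21Triangles hd hfg ho he hj hred, apex_mem_fan⟩
  · exact hj

end Triangles

section Apexes

variable {R B C : Finset Plane} {f g : Plane →L[ℝ] ℝ} {p b : Plane} {e : ℕ → Plane} {M k : ℕ}

lemma IsSlopeEnum.count_mem_red (he : IsSlopeEnum f g p ((R ∪ B).erase p) e) :
    Nat.count (fun i => e i ∈ R) #((R ∪ B).erase p) = #(R.erase p) := by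
  rw [← he.card_filter_eq_count (· ∈ R)]
  congr 1
  ext x
  simp only [Finset.mem_filter, Finset.mem_erase, Finset.mem_union]
  tauto

lemma IsSlopeEnum.count_notMem_red (he : IsSlopeEnum f g p ((R ∪ B).erase p) e)
    (hd : Disjoint R B) : Nat.count (fun i => e i ∉ R) #((R ∪ B).erase p) = #(B.erase p) := by
  rw [← he.card_filter_eq_count (· ∉ R)]
  congr 1
  ext x
  have hx : x ∈ B → x ∉ R := fun hxB hxR => Finset.disjoint_left.1 hd hxR hxB
  simp only [Finset.mem_filter, Finset.mem_erase, Finset.mem_union]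
  tauto

lemma card_red_le_card_blue_add_triangleDegree_of_leftmost (hd : Disjoint R B)
    (hfg : IsGenericFrame (R ∪ B) f g) (hb : b ∈ B) (hleft : ∀ x ∈ R ∪ B, f b ≤ f x) :
    #R ≤ #B + triangleDegree R B b := by
  have hbR : b ∉ R := Finset.disjoint_right.1 hd hb
  have hbS : b ∈ R ∪ B := Finset.mem_union_right R hb
  obtain ⟨e, he⟩ := hfg.exists_isSlopeEnum hbS hleft
  have hred := he.count_mem_red
  have hblue := he.count_notMem_red hd
  rw [Finset.erase_eq_of_notMem hbR] at hred
  rcases hM : #((R ∪ B).erase b) with _ | M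
  · rw [← hred, hM, Nat.count_zero]
    exact Nat.zero_le _
  · rw [Finset.card_erase_of_mem hb, hM] at hblue
    rw [hM] at hred
    have hpairs := count_red_le_count_blue_add_count_red_pairs (fun i => e i ∈ R) M
    have hdegree : Nat.count (fun j => e j ∈ R ∧ e (j + 1) ∈ R) M ≤ triangleDegree R B b := by
      refine (Nat.count_mono_left fun j hj hjj => ?_).trans
        (count_fan_triangles_le_triangleDegree hd hfg.linearIndependent hbS he (M := M) (by omega))
      rw [card_fan_triangle_inter he (by omega), if_neg hbR, if_pos hjj.1, if_pos hjj.2]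
    have hpos := Finset.card_pos.2 ⟨b, hb⟩
    omega

lemma triangleDegree_rightOf_add_le (hd : Disjoint R B) (hfg : IsGenericFrame (R ∪ B) f g)
    (hp : p ∈ R ∪ B) :
    triangleDegree (rightOf f p R) (rightOf f p B) p +
      triangleDegree (rightOf (-f) p R) (rightOf (-f) p B) p ≤ triangleDegree R B p := by
  have hf : f ≠ 0 := hfg.linearIndependent.ne_zero 0
  have hside {h : Plane →L[ℝ] ℝ} (hh : h ≠ 0) :
      emptyRed21Triangles (rightOf h p R) (rightOf h p B) ⊆ emptyRed21Triangles R B :=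
    emptyRed21Triangles_mono hd rightOf_subset rightOf_subset
      (rightOf_union ▸ emptyIn2_rightOf hh)
  have hdisj : Disjoint (emptyRed21Triangles (rightOf f p R) (rightOf f p B))
      (emptyRed21Triangles (rightOf (-f) p R) (rightOf (-f) p B)) := by
    refine Finset.disjoint_left.2 fun T hT hT' => ?_
    rw [mem_emptyRed21Triangles (hd.mono rightOf_subset rightOf_subset), ← rightOf_union] at hT hT'
    have hTp : T ⊆ {p} := by
      rw [← rightOf_inter_rightOf_neg hfg.injOn hp]
      exact Finset.subset_inter hT.1 hT'.1
    have := Finset.card_le_card hTp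
    rw [hT.2.1, Finset.card_singleton] at this
    omega
  rw [triangleDegree, triangleDegree,
    ← Finset.card_union_of_disjoint (Finset.disjoint_filter_filter hdisj), ← Finset.filter_union]
  exact Finset.card_le_card
    (Finset.filter_subset_filter _ (Finset.union_subset (hside hf) (hside (neg_ne_zero.2 hf))))

theorem card_red_le_card_blue_add_one_add_triangleDegree (hd : Disjoint R B)
    (hfg : IsGenericFrame (R ∪ B) f g) (hb : b ∈ B) :
    #R ≤ #B + 1 + triangleDegree R B b := by
  have hbS : b ∈ R ∪ B := Finset.mem_union_right R hb
  have hside {h : Plane →L[ℝ] ℝ} (hh : IsGenericFrame (R ∪ B) h g) :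
      #(rightOf h b R) ≤
        #(rightOf h b B) + triangleDegree (rightOf h b R) (rightOf h b B) b := by
    exact card_red_le_card_blue_add_triangleDegree_of_leftmost
      (hd.mono rightOf_subset rightOf_subset) (hh.mono_rightOf h b) (mem_rightOf.2 ⟨hb, le_rfl⟩)
      fun _ => le_of_mem_rightOf_union
  have hright := hside hfg
  have hleft := hside hfg.neg
  have hdegree := triangleDegree_rightOf_add_le hd hfg hbS
  have hred : #R ≤ #(rightOf f b R) + #(rightOf (-f) b R) := by
    conv_lhs => rw [← rightOf_union_rightOf_neg (f := f) (p := b) (S := R)]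
    exact Finset.card_union_le _ _
  have hblue := Finset.card_union_add_card_inter (rightOf f b B) (rightOf (-f) b B)
  rw [rightOf_union_rightOf_neg,
    rightOf_inter_rightOf_neg (hfg.injOn.mono (Finset.coe_subset.2 Finset.subset_union_right)) hb,
    Finset.card_singleton] at hblue
  omega

lemma card_inter_red_le_card_inter_blue_add (hd : Disjoint R B)
    (hfg : IsGenericFrame (R ∪ B) f g) (hC : C ⊆ R ∪ B) (hempty : EmptyIn2 (R ∪ B) C)
    (hb : b ∈ B) (hbC : b ∈ C) :
    #(C ∩ R) ≤ #(C ∩ B) + 1 + triangleDegree R B b := by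
  have hunion : C ∩ R ∪ C ∩ B = C := by
    rw [← Finset.inter_union_distrib_left, Finset.inter_eq_left.2 hC]
  have hlocal := card_red_le_card_blue_add_one_add_triangleDegree
    (hd.mono Finset.inter_subset_right Finset.inter_subset_right)
    (hfg.mono (hunion.trans_subset hC)) (Finset.mem_inter.2 ⟨hbC, hb⟩)
  have hmono := triangleDegree_mono hd Finset.inter_subset_right Finset.inter_subset_right
    (hunion.symm ▸ hempty) b
  omega

lemma IsSlopeEnum.mem_blue_iff (he : IsSlopeEnum f g p ((R ∪ B).erase p) e) (hd : Disjoint R B)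
    {j : ℕ} (hj : j < #((R ∪ B).erase p)) : e j ∈ B ↔ e j ∉ R := by
  have hS : e j ∈ R ∪ B := Finset.mem_of_mem_erase (he.mem hj)
  exact ⟨fun h => Finset.disjoint_right.1 hd h, (Finset.mem_union.1 hS).resolve_left⟩

-- Adding the apex to the points of a heavy interval makes one red point more than its excess, which
-- makes up for the `1` lost at the blue point.
lemma le_triangleDegree_of_mem_heavyBlue (hd : Disjoint R B) (hfg : IsGenericFrame (R ∪ B) f g)
    (hp : p ∈ R) (he : IsSlopeEnum f g p ((R ∪ B).erase p) e) (hM : M < #((R ∪ B).erase p))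
    {j : ℕ} (hj : j ∈ heavyBlue (fun i => e i ∈ R) M k) :
    e j ∈ B ∧ k ≤ triangleDegree R B (e j) := by
  obtain ⟨-, hblue, u, v, huj, hjv, hvM, hk⟩ := Finset.mem_filter.1 hj
  have hv : v < #((R ∪ B).erase p) := hvM.trans_lt hM
  have hjB : e j ∈ B := (he.mem_blue_iff hd (hjv.trans_lt hv)).2 hblue
  refine ⟨hjB, ?_⟩
  have hpB : p ∉ B := Finset.disjoint_left.1 hd hp
  have hfan := card_inter_red_le_card_inter_blue_add hd hfg
    (he.fan_subset (Finset.mem_union_left B hp) (Finset.erase_subset _ _) hv)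
    (emptyIn2_fan hfg.linearIndependent he (huj.trans hjv) hv) hjB
    ((he.mem_fan_iff hv (hjv.trans_lt hv)).2 ⟨huj, hjv⟩)
  rw [card_fan_inter he hv, card_fan_inter he hv, if_pos hp, if_neg hpB] at hfan
  have hnotred : #{l ∈ Finset.Icc u v | e l ∈ B} = #{l ∈ Finset.Icc u v | e l ∉ R} :=
    congrArg Finset.card (Finset.filter_congr fun l hl =>
      he.mem_blue_iff hd ((Finset.mem_Icc.1 hl).2.trans_lt hv))
  rw [colorExcess_eq_card_sub_card] at hk
  rw [show Finset.Ico u (v + 1) = Finset.Icc u v from Finset.Ico_add_one_right_eq_Icc u v] at hk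
  omega

lemma colorChanges_le_triangleDegree (hd : Disjoint R B) (hfg : LinearIndependent ℝ ![f, g])
    (hp : p ∈ R) (he : IsSlopeEnum f g p ((R ∪ B).erase p) e) (hM : M < #((R ∪ B).erase p)) :
    colorChanges (fun i => e i ∈ R) M ≤ triangleDegree R B p := by
  refine (Nat.count_mono_left fun j hj hchange => ?_).trans
    (count_fan_triangles_le_triangleDegree hd hfg (Finset.mem_union_left B hp) he hM)
  rw [card_fan_triangle_inter he (by omega), if_pos hp]
  split_ifs <;> tauto

end Apexes

section RedApex

variable {R B : Finset Plane} {f g : Plane →L[ℝ] ℝ} {p : Plane}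

lemma card_red_le_of_leftmost (hd : Disjoint R B) (hfg : IsGenericFrame (R ∪ B) f g) (hp : p ∈ R)
    (hleft : ∀ x ∈ R ∪ B, f p ≤ f x) (hcard : #R ≤ #B + 1) (k : ℕ) :
    #R ≤ 1 + 2 * #{b ∈ B | k ≤ triangleDegree R B b} + 2 * k * triangleDegree R B p := by
  have hpB : p ∉ B := Finset.disjoint_left.1 hd hp
  obtain ⟨e, he⟩ := hfg.exists_isSlopeEnum (Finset.mem_union_left B hp) hleft
  have hred := he.count_mem_red
  have hblue := he.count_notMem_red hd
  rw [Finset.card_erase_of_mem hp] at hred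
  rw [Finset.erase_eq_of_notMem hpB] at hblue
  rcases hM : #((R ∪ B).erase p) with _ | M
  · rw [hM, Nat.count_zero] at hred
    omega
  have htotal : #((R ∪ B).erase p) = #R - 1 + #B := by
    rw [Finset.card_erase_of_mem (Finset.mem_union_left B hp), Finset.card_union_of_disjoint hd]
    have := Finset.card_pos.2 ⟨p, hp⟩
    omega
  have hheavy : #(heavyBlue (fun i => e i ∈ R) M k) ≤ #{b ∈ B | k ≤ triangleDegree R B b} := by
    refine Finset.card_le_card_of_injOn e (fun j hj => Finset.mem_filter.2
      (le_triangleDegree_of_mem_heavyBlue hd hfg hp he (by omega) hj)) fun i hi j hj => ?_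
    have hi := Finset.mem_range.1 (Finset.mem_filter.1 hi).1
    have hj := Finset.mem_range.1 (Finset.mem_filter.1 hj).1
    exact he.eq_of_eq (by omega) (by omega)
  have hchanges := Nat.mul_le_mul_left (2 * k)
    (colorChanges_le_triangleDegree hd hfg.linearIndependent hp he (M := M) (by omega))
  rw [hM] at hred
  have := count_red_le_two_mul_card_heavyBlue_add (fun i => e i ∈ R) (M := M) k (by omega)
  omega

lemma triangleDegree_pos_of_leftmost (hd : Disjoint R B) (hfg : IsGenericFrame (R ∪ B) f g)
    (hp : p ∈ R) (hleft : ∀ x ∈ R ∪ B, f p ≤ f x) (hR : 2 ≤ #R) (hB : B.Nonempty) :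
    0 < triangleDegree R B p := by
  obtain ⟨e, he⟩ := hfg.exists_isSlopeEnum (Finset.mem_union_left B hp) hleft
  obtain ⟨q, hq, hqp⟩ := Finset.exists_mem_ne hR p
  obtain ⟨b, hb⟩ := hB
  have hbp : b ≠ p := fun h => Finset.disjoint_left.1 hd hp (h ▸ hb)
  obtain ⟨i, hi, rfl⟩ := he.bijOn.surjOn
    (Finset.mem_coe.2 (Finset.mem_erase.2 ⟨hqp, Finset.mem_union_left B hq⟩))
  obtain ⟨j, hj, rfl⟩ := he.bijOn.surjOn
    (Finset.mem_coe.2 (Finset.mem_erase.2 ⟨hbp, Finset.mem_union_right R hb⟩))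
  rw [Set.mem_Iio] at hi hj
  exact (colorChanges_pos (fun l => e l ∈ R) (M := #((R ∪ B).erase p) - 1) (by omega) (by omega) hq
    (Finset.disjoint_right.1 hd hb)).trans_le
    (colorChanges_le_triangleDegree hd hfg.linearIndependent hp he (by omega))

lemma triangleDegree_rightOf_le (hd : Disjoint R B) (hfg : IsGenericFrame (R ∪ B) f g)
    (p x : Plane) :
    triangleDegree (rightOf f p R) (rightOf f p B) x ≤ triangleDegree R B x :=
  triangleDegree_mono hd rightOf_subset rightOf_subset
    (rightOf_union ▸ emptyIn2_rightOf (hfg.linearIndependent.ne_zero 0)) x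

theorem card_rightOf_red_le (hd : Disjoint R B) (hfg : IsGenericFrame (R ∪ B) f g) (hp : p ∈ R)
    (hcard : #(rightOf f p R) ≤ #(rightOf f p B) + 1) (k : ℕ) :
    #(rightOf f p R) ≤
      1 + 2 * #{b ∈ B | k ≤ triangleDegree R B b} + 2 * k * triangleDegree R B p := by
  have hside := card_red_le_of_leftmost (hd.mono rightOf_subset rightOf_subset)
    (hfg.mono_rightOf f p) (mem_rightOf.2 ⟨hp, le_rfl⟩) (fun _ => le_of_mem_rightOf_union) hcard k
  refine hside.trans ?_
  gcongr 1 + 2 * #?_ + 2 * k * ?_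
  · exact fun b hb => Finset.mem_filter.2 ⟨rightOf_subset (Finset.mem_filter.1 hb).1,
      (Finset.mem_filter.1 hb).2.trans (triangleDegree_rightOf_le hd hfg p b)⟩
  · exact triangleDegree_rightOf_le hd hfg p p

lemma triangleDegree_pos (hd : Disjoint R B) (hfg : IsGenericFrame (R ∪ B) f g) (hp : p ∈ R)
    (hR : 2 ≤ #(rightOf f p R)) (hB : (rightOf f p B).Nonempty) : 0 < triangleDegree R B p :=
  (triangleDegree_pos_of_leftmost (hd.mono rightOf_subset rightOf_subset)
    (hfg.mono_rightOf f p) (mem_rightOf.2 ⟨hp, le_rfl⟩) (fun _ => le_of_mem_rightOf_union)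
    hR hB).trans_le
    (triangleDegree_rightOf_le hd hfg p p)

lemma triangleDegree_le_card (R B : Finset Plane) (x : Plane) :
    triangleDegree R B x ≤ #(emptyRed21Triangles R B) :=
  Finset.card_filter_le _ _

lemma card_emptyRed21Triangles_pos (hd : Disjoint R B) (hfg : IsGenericFrame (R ∪ B) f g)
    (hR : 2 ≤ #R) (hB : B.Nonempty) : 0 < #(emptyRed21Triangles R B) := by
  have hside {h : Plane →L[ℝ] ℝ} (hh : IsGenericFrame (R ∪ B) h g) {p b : Plane} (hp : p ∈ R)
      (hmin : ∀ q ∈ R, h p ≤ h q) (hb : b ∈ B) (hpb : h p ≤ h b) :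
      0 < #(emptyRed21Triangles R B) := by
    refine (triangleDegree_pos hd hh hp ?_ ⟨b, mem_rightOf.2 ⟨hb, hpb⟩⟩).trans_le
      (triangleDegree_le_card R B p)
    rwa [rightOf, Finset.filter_true_of_mem hmin]
  have hRne : R.Nonempty := Finset.card_pos.1 (by omega)
  obtain ⟨b, hb⟩ := hB
  obtain ⟨p, hp, hmin⟩ := R.exists_min_image f hRne
  obtain ⟨q, hq, hmax⟩ := R.exists_max_image f hRne
  rcases le_total (f p) (f b) with hpb | hbp
  · exact hside hfg hp hmin hb hpb
  · exact hside hfg.neg hq (fun x hx => neg_le_neg (hmax x hx)) hb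
      (neg_le_neg (hbp.trans (hmin q hq)))

end RedApex

section Averaging

variable {R B : Finset Plane} {f g : Plane →L[ℝ] ℝ} {p : Plane}

lemma sum_triangleDegree (R B A : Finset Plane) :
    ∑ x ∈ A, triangleDegree R B x = ∑ T ∈ emptyRed21Triangles R B, #(T ∩ A) := by
  simp only [triangleDegree, Finset.inter_comm _ A, ← Finset.filter_mem_eq_inter]
  exact Finset.sum_card_bipartiteAbove_eq_sum_card_bipartiteBelow (· ∈ ·)

lemma sum_triangleDegree_blue (R B : Finset Plane) :
    ∑ b ∈ B, triangleDegree R B b = #(emptyRed21Triangles R B) := by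
  rw [sum_triangleDegree, Finset.card_eq_sum_ones]
  exact Finset.sum_congr rfl fun T hT => (Finset.mem_filter.1 hT).2.2.1

lemma sum_triangleDegree_red_le {A : Finset Plane} (B : Finset Plane) (hA : A ⊆ R) :
    ∑ p ∈ A, triangleDegree R B p ≤ 2 * #(emptyRed21Triangles R B) := by
  rw [sum_triangleDegree, mul_comm]
  refine Finset.sum_le_card_nsmul _ _ _ fun T hT => ?_
  exact (Finset.card_le_card (Finset.inter_subset_inter_left hA)).trans
    (Finset.mem_filter.1 hT).2.1.le

lemma sum_card_superlevel_le_sum {α : Type*} (s : Finset α) (d : α → ℕ) (K : ℕ) :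
    ∑ k ∈ Finset.Icc 1 K, #{x ∈ s | k ≤ d x} ≤ ∑ x ∈ s, d x := by
  have hlayer (x : α) : #{k ∈ Finset.Icc 1 K | k ≤ d x} ≤ d x :=
    calc #{k ∈ Finset.Icc 1 K | k ≤ d x} ≤ #(Finset.Icc 1 (d x)) :=
          Finset.card_le_card fun k hk => by
            obtain ⟨hk, hkd⟩ := Finset.mem_filter.1 hk
            exact Finset.mem_Icc.2 ⟨(Finset.mem_Icc.1 hk).1, hkd⟩
      _ = d x := by simp
  calc ∑ k ∈ Finset.Icc 1 K, #{x ∈ s | k ≤ d x}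
      = ∑ x ∈ s, #{k ∈ Finset.Icc 1 K | k ≤ d x} :=
        Finset.sum_card_bipartiteAbove_eq_sum_card_bipartiteBelow (fun k x => k ≤ d x)
    _ ≤ ∑ x ∈ s, d x := Finset.sum_le_sum fun x _ => hlayer x

lemma mul_card_rightOf_red_sub_one_le (hd : Disjoint R B) (hfg : IsGenericFrame (R ∪ B) f g)
    (hp : p ∈ R) (hcard : #(rightOf f p R) ≤ #(rightOf f p B) + 1) (K : ℕ) :
    K * (#(rightOf f p R) - 1) ≤
      2 * #(emptyRed21Triangles R B) + triangleDegree R B p * (K * (K + 1)) := by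
  have hgauss : ∑ k ∈ Finset.Icc 1 K, 2 * k = K * (K + 1) := by
    induction K with
    | zero => rfl
    | succ K ih => rw [Finset.sum_Icc_succ_top (by omega), ih]; ring
  calc K * (#(rightOf f p R) - 1)
      = ∑ k ∈ Finset.Icc 1 K, (#(rightOf f p R) - 1) := by simp
    _ ≤ ∑ k ∈ Finset.Icc 1 K, (2 * #{b ∈ B | k ≤ triangleDegree R B b} +
          2 * k * triangleDegree R B p) := by
        refine Finset.sum_le_sum fun k _ => ?_
        have := card_rightOf_red_le hd hfg hp hcard k
        omega
    _ = 2 * ∑ k ∈ Finset.Icc 1 K, #{b ∈ B | k ≤ triangleDegree R B b} +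
          triangleDegree R B p * (K * (K + 1)) := by
        rw [Finset.sum_add_distrib, ← Finset.mul_sum, ← Finset.sum_mul, hgauss, mul_comm (K * _)]
    _ ≤ _ := by
        rw [← sum_triangleDegree_blue R B]
        gcongr
        exact sum_card_superlevel_le_sum B _ K

lemma card_filter_card_rightOf_le (hf : Set.InjOn f R) (a : ℕ) :
    #{p ∈ R | #(rightOf f p R) ≤ a} ≤ a := by
  have hlt {p q : Plane} (hp : p ∈ R) (hpq : f p < f q) : #(rightOf f q R) < #(rightOf f p R) := by
    refine Finset.card_lt_card (Finset.ssubset_iff_of_subset (fun x hx => ?_) |>.2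
      ⟨p, mem_rightOf.2 ⟨hp, le_rfl⟩, fun h => hpq.not_ge (mem_rightOf.1 h).2⟩)
    exact mem_rightOf.2 ⟨rightOf_subset hx, hpq.le.trans (mem_rightOf.1 hx).2⟩
  calc #{p ∈ R | #(rightOf f p R) ≤ a} ≤ #(Finset.Icc 1 a) := by
        refine Finset.card_le_card_of_injOn (fun p => #(rightOf f p R)) (fun p hp => ?_)
          fun p hp q hq hpq => ?_
        · obtain ⟨hp, hpa⟩ := Finset.mem_filter.1 hp
          exact Finset.mem_coe.2
            (Finset.mem_Icc.2 ⟨Finset.card_pos.2 ⟨p, mem_rightOf.2 ⟨hp, le_rfl⟩⟩, hpa⟩)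
        · have hp := (Finset.mem_filter.1 hp).1
          have hq := (Finset.mem_filter.1 hq).1
          refine hf hp hq ((not_lt.1 fun h => ?_).antisymm (not_lt.1 fun h => ?_))
          exacts [(hlt hq h).ne hpq, (hlt hp h).ne' hpq]
    _ = a := by simp

lemma exists_middle_red_le (B : Finset Plane) (hf : Set.InjOn f R) (hR : R.Nonempty) :
    ∃ p ∈ R, #R / 4 < #(rightOf f p R) ∧ #R / 4 < #(rightOf (-f) p R) ∧
      #R * triangleDegree R B p ≤ 4 * #(emptyRed21Triangles R B) := by
  set a := #R / 4
  set A := {p ∈ R | a < #(rightOf f p R) ∧ a < #(rightOf (-f) p R)} with hA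
  have hRA : #R ≤ a + a + #A := by
    have hright := card_filter_card_rightOf_le hf a
    have hleft := card_filter_card_rightOf_le (f := -f) (neg_injective.comp_injOn hf) a
    have hcover : R ⊆ {p ∈ R | #(rightOf f p R) ≤ a} ∪ {p ∈ R | #(rightOf (-f) p R) ≤ a} ∪ A := by
      intro p hp
      simp only [hA, Finset.mem_union, Finset.mem_filter, hp, true_and]
      omega
    have h₁ := Finset.card_le_card hcover
    have h₂ := Finset.card_union_le
      ({p ∈ R | #(rightOf f p R) ≤ a} ∪ {p ∈ R | #(rightOf (-f) p R) ≤ a}) A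
    have h₃ := Finset.card_union_le {p ∈ R | #(rightOf f p R) ≤ a} {p ∈ R | #(rightOf (-f) p R) ≤ a}
    omega
  have hRpos := Finset.card_pos.2 hR
  obtain ⟨p, hpA, hmin⟩ := A.exists_min_image (triangleDegree R B) (Finset.card_pos.1 (by omega))
  obtain ⟨hpR, hright, hleft⟩ := Finset.mem_filter.1 hpA
  refine ⟨p, hpR, hright, hleft, ?_⟩
  calc #R * triangleDegree R B p ≤ 2 * (#A * triangleDegree R B p) := by
        rw [← mul_assoc]
        exact Nat.mul_le_mul_right _ (by omega)
    _ ≤ 2 * ∑ q ∈ A, triangleDegree R B q := by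
        gcongr
        exact Finset.card_nsmul_le_sum A _ _ hmin
    _ ≤ 2 * (2 * #(emptyRed21Triangles R B)) := by
        gcongr
        exact sum_triangleDegree_red_le B (Finset.filter_subset _ _)
    _ = 4 * #(emptyRed21Triangles R B) := by ring

lemma card_rightOf_red_le_or (hfg : IsGenericFrame (R ∪ B) f g) (hp : p ∈ R)
    (hcard : #R ≤ #B + 1) :
    #(rightOf f p R) ≤ #(rightOf f p B) + 1 ∨ #(rightOf (-f) p R) ≤ #(rightOf (-f) p B) + 1 := by
  have hred := Finset.card_union_add_card_inter (rightOf f p R) (rightOf (-f) p R)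
  rw [rightOf_union_rightOf_neg, rightOf_inter_rightOf_neg (hfg.injOn.mono (by simp)) hp,
    Finset.card_singleton] at hred
  have hblue : #B ≤ #(rightOf f p B) + #(rightOf (-f) p B) := by
    conv_lhs => rw [← rightOf_union_rightOf_neg (f := f) (p := p) (S := B)]
    exact Finset.card_union_le _ _
  omega

end Averaging

lemma rpow_three_halves_le_of_forall_mul_le {n r d t : ℕ} (hd : 1 ≤ d) (hnd : n * d ≤ 4 * t)
    (hnr : n ≤ 4 * r + 3) (hK : ∀ K, K * r ≤ 2 * t + d * (K * (K + 1))) :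
    (1 / 32 : ℝ) * (n : ℝ) ^ ((3 : ℝ) / 2) ≤ t := by
  set m : ℝ := √n
  have hm0 : 0 ≤ m := Real.sqrt_nonneg _
  have hmn : m ^ 2 = n := Real.sq_sqrt n.cast_nonneg
  have hpow : (n : ℝ) ^ ((3 : ℝ) / 2) = m ^ 3 := by
    rw [← hmn, ← Real.rpow_natCast_mul hm0, ← Real.rpow_natCast]
    norm_num
  by_contra! hlt
  rw [hpow] at hlt
  have hd1 : (1 : ℝ) ≤ d := by exact_mod_cast hd
  have hndR : m ^ 2 * d ≤ 4 * t := by rw [hmn]; exact_mod_cast hnd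
  have hdm : (d : ℝ) < m / 8 := by
    refine lt_of_mul_lt_mul_left (a := m ^ 2) ?_ (sq_nonneg m)
    linarith [show m ^ 2 * (m / 8) = m ^ 3 / 8 by ring]
  have hm8 : 8 < m := by linarith
  set K := ⌊m⌋₊
  have hKm : (K : ℝ) ≤ m := Nat.floor_le hm0
  have hmK : m < K + 1 := Nat.lt_floor_add_one m
  have hKr : (K : ℝ) * r ≤ 2 * t + d * (K * (K + 1)) := by exact_mod_cast hK K
  have hr : m ^ 2 ≤ 4 * r + 3 := by rw [hmn]; exact_mod_cast hnr
  have hgain : (m ^ 2 - m - 6) / 8 ≤ r - d * (K + 1) := by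
    have : (d : ℝ) * (K + 1) ≤ m / 8 * (m + 1) := by gcongr
    linarith
  have hcubic : m ^ 3 / 16 ≤ (m - 1) * ((m ^ 2 - m - 6) / 8) := by nlinarith [sq_nonneg (m - 8)]
  have hproduct : (m - 1) * ((m ^ 2 - m - 6) / 8) ≤ K * (r - d * (K + 1)) := by
    gcongr
    · nlinarith
    · linarith
  linarith

theorem empty_red_21_triangles_explicit_lower_bound_general {R B : Finset Plane}
    (hd : Disjoint R B) (hR : 2 ≤ #R) (hcard : #R ≤ #B + 1) (hS : GenPos2 (R ∪ B)) :
    (1 / 32 : ℝ) * (#R : ℝ) ^ ((3 : ℝ) / 2) ≤ emptyRed21Count R B := by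
  rw [emptyRed21Count_eq_card]
  obtain ⟨f, g, hfg⟩ := hS.exists_isGenericFrame
  obtain ⟨p, hp, hright, hleft, hdegree⟩ := exists_middle_red_le B
    (hfg.injOn.mono (Finset.coe_subset.2 Finset.subset_union_left)) (Finset.card_pos.1 (by omega))
  obtain hsmall | hlarge := lt_or_ge #R 4
  · have hpos := card_emptyRed21Triangles_pos hd hfg hR (Finset.card_pos.1 (by omega))
    exact rpow_three_halves_le_of_forall_mul_le (r := 0) le_rfl (by omega) (by omega) (by simp)
  have hside {h : Plane →L[ℝ] ℝ} (hh : IsGenericFrame (R ∪ B) h g)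
      (hmiddle : #R / 4 < #(rightOf h p R)) (hhcard : #(rightOf h p R) ≤ #(rightOf h p B) + 1) :
      (1 / 32 : ℝ) * (#R : ℝ) ^ ((3 : ℝ) / 2) ≤ #(emptyRed21Triangles R B) :=
    rpow_three_halves_le_of_forall_mul_le
      (triangleDegree_pos hd hh hp (by omega) (Finset.card_pos.1 (by omega))) hdegree (by omega)
      (mul_card_rightOf_red_sub_one_le hd hh hp hhcard)
  obtain h | h := card_rightOf_red_le_or hfg hp hcard
  exacts [hside hfg hright h, hside hfg.neg hleft h]

theorem empty_red_21_triangles_explicit_lower_bound :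
    ∀ (n : ℕ), 22 ≤ n → ∀ (R B : Finset (EuclideanSpace ℝ (Fin 2))),
      Disjoint R B → R.card = n → n - 1 ≤ B.card → GenPos2 (R ∪ B) →
      (1 / 32 : ℝ) * (n : ℝ) ^ ((3 : ℝ) / 2) ≤ (emptyRed21Count R B : ℝ) := by
  rintro n hn R B hd rfl hcard hS
  exact empty_red_21_triangles_explicit_lower_bound_general hd (by omega) (by omega) hS
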